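/- arXiv:2308.10914 — 2 statements merged into one kernel-verified Lean document; each statement's English description precedes it below -/
import Mathlib

section
/- Every nonempty family of finite-variation signed measures on a semi-ring 𝒮 that is bounded above by a finite-variation signed measure has a least upper bound (in the pointwise order) which is itself a finite-variation signed measure on 𝒮. (Dedekind completeness of the Riesz space ca(𝒮).) -/
/-!
The least upper bound is `σ A = sup` over finite partitions `P` of `A` of `Σ_{C ∈ P} g C`, where
`g C = sup_{μ ∈ G} μ C`. Since `g ≤ β` and `β` is additive, the supremum is finite and `σ ≤ β`;
if `τ` is additive and dominates `G`, the same comparison gives `σ ≤ τ`.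

*Finite additivity.* The set function `g` is subadditive, so cutting a partition of `⋃ A i` along
the `A i` does not decrease its sum (`join_le_sum`); conversely, partitions of the `A i` glue to a
partition of the union (`sum_join_le`).

*Countable additivity.* For `μ₀ ∈ G` both `u = σ - μ₀` and `w = β - σ` are nonnegative charges,
hence `Σ u (A n) ≤ u (⋃ A n)` and `Σ w (A n) ≤ w (⋃ A n)` (`sum_le_of_nonneg`). The sum `u + w` is
the countably additive `β - μ₀`, so both inequalities are equalities, and `σ = u + μ₀` is countably
additive.

*Finite variation.* From `μ₀ ≤ σ ≤ β` follows `|σ| ≤ |μ₀| + |β|`.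
-/

open MeasureTheory Set
open scoped ENNReal NNReal BigOperators

namespace SignedCharges

variable {Ω : Type*}

/-- `P` is a finite partition of `A` by elements of the family `S`. -/
def IsPartition (S : Set (Set Ω)) (A : Set Ω) (P : Finset (Set Ω)) : Prop :=
  ↑P ⊆ S ∧ (P : Set (Set Ω)).PairwiseDisjoint id ∧ ⋃₀ ↑P = A

/-- The partition-supremum `μ_F` of a family `F = (ν j)` of `EReal`-valued set functions:
`μ_F(A) = sup` over finite partitions `Π` of `A` by elements of `S` of `Σ_{C ∈ Π} sup_j ν j C`. -/
noncomputable def supFun {J : Type*} (S : Set (Set Ω)) (ν : J → Set Ω → EReal)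
    (A : Set Ω) : EReal :=
  ⨆ P : Finset (Set Ω), ⨆ _ : IsPartition S A P, ∑ C ∈ P, ⨆ j, ν j C

/-- The admissibility hypothesis: `sup_j ν j A > -∞` for every `A ∈ S`. -/
def Admissible {J : Type*} (S : Set (Set Ω)) (ν : J → Set Ω → EReal) : Prop :=
  ∀ A ∈ S, ⊥ < ⨆ j, ν j A

/-- An `EReal`-valued signed charge on `S`: vanishes on `∅`, finitely additive on finite
disjoint unions within `S`, and omits at least one of the values `+∞`, `-∞` on `S`. -/
structure IsCharge (S : Set (Set Ω)) (μ : Set Ω → EReal) : Prop where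
  empty : μ ∅ = 0
  additive : ∀ (n : ℕ) (A : Fin n → Set Ω), (∀ i, A i ∈ S) →
    Pairwise (Function.onFun Disjoint A) → (⋃ i, A i) ∈ S → μ (⋃ i, A i) = ∑ i, μ (A i)
  omits : (∀ A ∈ S, μ A ≠ ⊤) ∨ (∀ A ∈ S, μ A ≠ ⊥)

/-- A finite (real-valued) signed charge on `S`. -/
structure IsRealCharge (S : Set (Set Ω)) (μ : Set Ω → ℝ) : Prop where
  empty : μ ∅ = 0
  additive : ∀ (n : ℕ) (A : Fin n → Set Ω), (∀ i, A i ∈ S) →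
    Pairwise (Function.onFun Disjoint A) → (⋃ i, A i) ∈ S → μ (⋃ i, A i) = ∑ i, μ (A i)

/-- Countable additivity for a real-valued set function (unconditional convergence). -/
def CountablyAdditiveR (S : Set (Set Ω)) (μ : Set Ω → ℝ) : Prop :=
  ∀ A : ℕ → Set Ω, (∀ n, A n ∈ S) → Pairwise (Function.onFun Disjoint A) →
    (⋃ n, A n) ∈ S → HasSum (fun n => μ (A n)) (μ (⋃ n, A n))

/-- Countable sub-additivity for an `EReal`-valued set function. -/
def CountablySubadditiveE (S : Set (Set Ω)) (μ : Set Ω → EReal) : Prop :=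
  ∀ A : ℕ → Set Ω, (∀ n, A n ∈ S) → Pairwise (Function.onFun Disjoint A) →
    (⋃ n, A n) ∈ S → μ (⋃ n, A n) ≤ ∑' n, μ (A n)

/-- Countable additivity for an `EReal`-valued set function. -/
def CountablyAdditiveE (S : Set (Set Ω)) (μ : Set Ω → EReal) : Prop :=
  ∀ A : ℕ → Set Ω, (∀ n, A n ∈ S) → Pairwise (Function.onFun Disjoint A) →
    (⋃ n, A n) ∈ S → μ (⋃ n, A n) = ∑' n, μ (A n)

/-- `μ⁺ = μ ∨ 0` : sup over finite partitions of `Σ_{C} max (μ C) 0`. -/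
noncomputable def pos (S : Set (Set Ω)) (μ : Set Ω → EReal) (A : Set Ω) : EReal :=
  ⨆ P : Finset (Set Ω), ⨆ _ : IsPartition S A P, ∑ C ∈ P, max (μ C) 0

/-- `μ⁻ = (-μ) ∨ 0` : sup over finite partitions of `Σ_{C} max (-μ C) 0`. -/
noncomputable def neg (S : Set (Set Ω)) (μ : Set Ω → EReal) (A : Set Ω) : EReal :=
  ⨆ P : Finset (Set Ω), ⨆ _ : IsPartition S A P, ∑ C ∈ P, max (-μ C) 0

/-- The variation `|μ|` : sup over finite partitions of `Σ_{C} |μ C|`. -/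
noncomputable def var (S : Set (Set Ω)) (μ : Set Ω → EReal) (A : Set Ω) : EReal :=
  ⨆ P : Finset (Set Ω), ⨆ _ : IsPartition S A P, ∑ C ∈ P, max (μ C) (-μ C)

/-- The infimum `α ∧ β` of two nonnegative charges:
inf over finite partitions of `Σ_{C} min (α C) (β C)`. -/
noncomputable def infC (S : Set (Set Ω)) (α β : Set Ω → EReal) (A : Set Ω) : EReal :=
  ⨅ P : Finset (Set Ω), ⨅ _ : IsPartition S A P, ∑ C ∈ P, min (α C) (β C)

/-- The ring generated by a semi-ring: finite unions of elements of `S`. -/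
def genRing (S : Set (Set Ω)) : Set (Set Ω) :=
  {A | ∃ P : Finset (Set Ω), ↑P ⊆ S ∧ A = ⋃₀ ↑P}

/-- Coercion of a real-valued set function to an `EReal`-valued one. -/
def toE (μ : Set Ω → ℝ) : Set Ω → EReal := fun A => (μ A : EReal)

/-- `μ` has finite variation on `S`. -/
def FiniteVar (S : Set (Set Ω)) (μ : Set Ω → ℝ) : Prop :=
  ∀ A ∈ S, var S (toE μ) A ≠ ⊤

/-! ### The partition supremum -/

/-- The pointwise supremum of a family `G` of set functions (meaningful where bounded above). -/
noncomputable def familySup (G : Set (Set Ω → ℝ)) (C : Set Ω) : ℝ :=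
  sSup ((fun μ => μ C) '' G)

/-- The sums `Σ_{C ∈ P} sup_{μ ∈ G} μ C` over the finite partitions `P` of `A`. -/
def partitionSums (S : Set (Set Ω)) (G : Set (Set Ω → ℝ)) (A : Set Ω) : Set ℝ :=
  {x | ∃ P : Finset (Set Ω), IsPartition S A P ∧ ∑ C ∈ P, familySup G C = x}

/-- The real-valued partition supremum of the family `G`, which is its join in `ca(S)` when `G` is
bounded above by an additive set function. -/
noncomputable def join (S : Set (Set Ω)) (G : Set (Set Ω → ℝ)) (A : Set Ω) : ℝ :=
  sSup (partitionSums S G A)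

/-! ### Charges and partitions of a semi-ring -/

/-- A disjoint family in `S`, repetitions of the empty set allowed, gives a partition of its
union. -/
lemma isPartition_image [DecidableEq (Set Ω)] {ι : Type*} {S : Set (Set Ω)} {A : Set Ω}
    {s : Finset ι} {B : ι → Set Ω} (hB : ∀ i ∈ s, B i ∈ S)
    (hd : (s : Set ι).PairwiseDisjoint B) (hU : ⋃ i ∈ s, B i = A) :
    IsPartition S A (s.image B) := by
  refine ⟨?_, ?_, ?_⟩
  · intro C hC
    obtain ⟨i, hi, rfl⟩ := Finset.mem_image.1 (Finset.mem_coe.1 hC)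
    exact hB i hi
  · intro C hC D hD hCD
    obtain ⟨i, hi, rfl⟩ := Finset.mem_image.1 (Finset.mem_coe.1 hC)
    obtain ⟨j, hj, rfl⟩ := Finset.mem_image.1 (Finset.mem_coe.1 hD)
    exact hd hi hj (fun h => hCD (by rw [h]))
  · rw [← hU]
    simp [sUnion_image]

lemma IsPartition.singleton {S : Set (Set Ω)} {A : Set Ω} (hA : A ∈ S) : IsPartition S A {A} := by
  refine ⟨by simpa using hA, by simp, by simp⟩

/-- Additivity of a charge over families indexed by an arbitrary finset. -/
lemma IsRealCharge.sum_eq {ι : Type*} {S : Set (Set Ω)} {μ : Set Ω → ℝ} (hμ : IsRealCharge S μ)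
    {A : Set Ω} (hA : A ∈ S) {s : Finset ι} {B : ι → Set Ω} (hB : ∀ i ∈ s, B i ∈ S)
    (hd : (s : Set ι).PairwiseDisjoint B) (hU : ⋃ i ∈ s, B i = A) :
    ∑ i ∈ s, μ (B i) = μ A := by
  have e := s.equivFin
  have hU' : ⋃ k, B (e.symm k) = A := by
    rw [← hU, e.symm.surjective.iUnion_comp (fun i : s => B i)]
    exact iUnion_subtype _ _
  have h := hμ.additive s.card (fun k => B (e.symm k)) (fun k => hB _ (e.symm k).2)
    (fun k l hkl => hd (e.symm k).2 (e.symm l).2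
      (fun h => hkl (e.symm.injective (Subtype.ext h)))) (by rw [hU']; exact hA)
  rw [hU'] at h
  rw [h, ← Finset.sum_coe_sort s, e.symm.sum_comp (fun i : s => μ (B i))]

lemma IsRealCharge.sum_partition {S : Set (Set Ω)} {μ : Set Ω → ℝ} (hμ : IsRealCharge S μ)
    {A : Set Ω} (hA : A ∈ S) {P : Finset (Set Ω)} (hP : IsPartition S A P) :
    ∑ C ∈ P, μ C = μ A :=
  hμ.sum_eq (B := id) hA (fun _ hi => hP.1 hi) hP.2.1 (by rw [← hP.2.2, sUnion_eq_biUnion]; simp)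

lemma IsRealCharge.sub {S : Set (Set Ω)} {μ ν : Set Ω → ℝ} (hμ : IsRealCharge S μ)
    (hν : IsRealCharge S ν) : IsRealCharge S (fun A => μ A - ν A) where
  empty := by simp [hμ.empty, hν.empty]
  additive n A hA hd hU := by
    rw [hμ.additive n A hA hd hU, hν.additive n A hA hd hU, Finset.sum_sub_distrib]

/-- A nonnegative charge on a semi-ring is superadditive on finite subfamilies: the complement in
`A` of finitely many members is a finite disjoint union of elements of `S`. -/
lemma sum_le_of_nonneg {S : Set (Set Ω)} (hS : IsSetSemiring S) {ν : Set Ω → ℝ}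
    (hν : IsRealCharge S ν) (h0 : ∀ A ∈ S, 0 ≤ ν A) {ι : Type*} {A : Set Ω} (hA : A ∈ S)
    {B : ι → Set Ω} (s : Finset ι) (hB : ∀ i ∈ s, B i ∈ S)
    (hd : (s : Set ι).PairwiseDisjoint B) (hU : ⋃ i ∈ s, B i ⊆ A) :
    ∑ i ∈ s, ν (B i) ≤ ν A := by
  classical
  obtain ⟨J, hJS, hJd, hJ⟩ := hS.exists_disjoint_finset_sdiff_eq (I := s.image B) hA (by
    intro C hC
    obtain ⟨i, hi, rfl⟩ := Finset.mem_image.1 (Finset.mem_coe.1 hC)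
    exact hB i hi)
  have hcross : ∀ i ∈ s, ∀ C ∈ J, Disjoint (B i) C := by
    intro i hi C hC
    rw [Set.disjoint_left]
    intro x hx hxC
    have : x ∈ A \ ⋃₀ ↑(s.image B) := by rw [hJ]; exact ⟨C, hC, hxC⟩
    exact this.2 ⟨B i, by simpa using ⟨i, hi, rfl⟩, hx⟩
  have key := hν.sum_eq hA (s := s.disjSum J) (B := Sum.elim B id) ?_ ?_ ?_
  · rw [Finset.sum_disjSum] at key
    simp only [Sum.elim_inl, Sum.elim_inr, id] at key
    have := Finset.sum_nonneg (fun C hC => h0 C (hJS (Finset.mem_coe.2 hC)) : ∀ C ∈ J, 0 ≤ ν C)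
    linarith
  · rintro (i | C) h
    · exact hB i (by simpa using h)
    · exact hJS (by simpa using h)
  · rintro (i | C) h (j | D) h' hne
    · exact hd (by simpa using h) (by simpa using h') (fun e => hne (by rw [e]))
    · exact hcross i (by simpa using h) D (by simpa using h')
    · exact (hcross j (by simpa using h') C (by simpa using h)).symm
    · exact hJd (by simpa using h) (by simpa using h') (fun e => hne (congrArg Sum.inr e))
  · ext x
    have hx : x ∈ A \ ⋃₀ ↑(s.image B) ↔ x ∈ ⋃₀ (J : Set (Set Ω)) := by rw [hJ]
    have hx' : x ∈ ⋃ i ∈ s, B i → x ∈ A := fun h => hU h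
    simp at hx hx' ⊢
    grind

/-! ### Squeezing between countably additive charges of finite variation -/

/-- Squeezing: a charge lying between two countably additive charges is countably additive. -/
lemma countablyAdditive_of_between {S : Set (Set Ω)} (hS : IsSetSemiring S)
    {α σ β : Set Ω → ℝ} (hα : IsRealCharge S α) (hαc : CountablyAdditiveR S α)
    (hβ : IsRealCharge S β) (hβc : CountablyAdditiveR S β) (hσ : IsRealCharge S σ)
    (h1 : ∀ A ∈ S, α A ≤ σ A) (h2 : ∀ A ∈ S, σ A ≤ β A) : CountablyAdditiveR S σ := by
  intro A hA hd hU
  have bound : ∀ ν : Set Ω → ℝ, IsRealCharge S ν → (∀ A ∈ S, 0 ≤ ν A) →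
      ∀ s : Finset ℕ, ∑ i ∈ s, ν (A i) ≤ ν (⋃ n, A n) := fun ν hν h0 s =>
    sum_le_of_nonneg hS hν h0 hU s (fun i _ => hA i) (fun i _ j _ hij => hd hij)
      (iUnion₂_subset fun i _ => subset_iUnion A i)
  have hu0 : ∀ A ∈ S, 0 ≤ σ A - α A := fun A hA => sub_nonneg.2 (h1 A hA)
  have hw0 : ∀ A ∈ S, 0 ≤ β A - σ A := fun A hA => sub_nonneg.2 (h2 A hA)
  have bu := bound _ (hσ.sub hα) hu0
  have bw := bound _ (hβ.sub hσ) hw0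
  have su := summable_of_sum_le (fun i => hu0 (A i) (hA i)) bu
  have sw := summable_of_sum_le (fun i => hw0 (A i) (hA i)) bw
  have tu := su.tsum_le_of_sum_le bu
  have tw := sw.tsum_le_of_sum_le bw
  -- `Σ (u + w) (A n) = (u + w) (⋃ A n)`, so the inequalities `tu` and `tw` are equalities.
  have hsum := (su.hasSum.add sw.hasSum).unique
    (((hβc A hA hd hU).sub (hαc A hA hd hU)).congr_fun (fun n => by ring))
  have hu := su.hasSum
  rw [show ∑' i, (σ (A i) - α (A i)) = σ (⋃ n, A n) - α (⋃ n, A n) by linarith] at hu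
  simpa using hu.add (hαc A hA hd hU)

/-- Finite variation in terms of real sums. -/
lemma finiteVar_iff {S : Set (Set Ω)} {μ : Set Ω → ℝ} : FiniteVar S μ ↔
    ∀ A ∈ S, ∃ K : ℝ, ∀ P : Finset (Set Ω), IsPartition S A P → ∑ C ∈ P, |μ C| ≤ K := by
  have hc : ∀ P : Finset (Set Ω),
      ∑ C ∈ P, max (toE μ C) (-toE μ C) = ((∑ C ∈ P, |μ C| : ℝ) : EReal) := by
    intro P
    classical
    induction P using Finset.induction_on with
    | empty => simp
    | insert a P ha ih =>
      rw [Finset.sum_insert ha, Finset.sum_insert ha, ih, EReal.coe_add, abs_eq_max_neg]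
      congr 1
  refine forall₂_congr fun A hA => ⟨fun h => ⟨(var S (toE μ) A).toReal, fun P hP => ?_⟩, ?_⟩
  · rw [← EReal.coe_le_coe_iff, ← hc]
    exact (le_iSup₂ (f := fun (P : Finset (Set Ω)) (_ : IsPartition S A P) =>
      ∑ C ∈ P, max (toE μ C) (-toE μ C)) P hP).trans (EReal.le_coe_toReal h)
  · rintro ⟨K, hK⟩ h
    have : var S (toE μ) A ≤ (K : EReal) :=
      iSup₂_le fun P hP => by rw [hc]; exact EReal.coe_le_coe_iff.2 (hK P hP)
    rw [h] at this
    exact EReal.coe_ne_top K (top_le_iff.1 this)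

lemma finiteVar_of_between {S : Set (Set Ω)} {α σ β : Set Ω → ℝ} (hα : FiniteVar S α)
    (hβ : FiniteVar S β) (h1 : ∀ A ∈ S, α A ≤ σ A) (h2 : ∀ A ∈ S, σ A ≤ β A) :
    FiniteVar S σ := by
  rw [finiteVar_iff] at *
  intro A hA
  obtain ⟨K, hK⟩ := hα A hA
  obtain ⟨L, hL⟩ := hβ A hA
  refine ⟨K + L, fun P hP => (Finset.sum_le_sum (g := fun C => |α C| + |β C|) ?_).trans ?_⟩
  · intro C hC
    have hCS := hP.1 hC
    have := h1 C hCS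
    have := h2 C hCS
    grind
  · rw [Finset.sum_add_distrib]
    exact add_le_add (hK P hP) (hL P hP)

/-! ### The join of a bounded family of charges -/

section Join

variable {S : Set (Set Ω)} {G : Set (Set Ω → ℝ)} {β : Set Ω → ℝ}

lemma familySup_le (hne : G.Nonempty) {τ : Set Ω → ℝ} (hτ : ∀ μ ∈ G, ∀ A ∈ S, μ A ≤ τ A)
    {C : Set Ω} (hC : C ∈ S) : familySup G C ≤ τ C := by
  refine csSup_le (hne.image _) ?_
  rintro _ ⟨μ, hμ, rfl⟩
  exact hτ μ hμ C hC

lemma le_familySup (hub : ∀ μ ∈ G, ∀ A ∈ S, μ A ≤ β A) {C : Set Ω} (hC : C ∈ S)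
    {μ : Set Ω → ℝ} (hμ : μ ∈ G) : μ C ≤ familySup G C := by
  refine le_csSup ⟨β C, ?_⟩ ⟨μ, hμ, rfl⟩
  rintro _ ⟨ν, hν, rfl⟩
  exact hub ν hν C hC

lemma familySup_empty (hne : G.Nonempty) (hG : ∀ μ ∈ G, IsRealCharge S μ) :
    familySup G ∅ = 0 := by
  have : (fun μ : Set Ω → ℝ => μ ∅) '' G = {0} := by
    rw [← hne.image_const 0]
    exact image_congr fun μ hμ => (hG μ hμ).empty
  rw [familySup, this, csSup_singleton]

/-- The pointwise supremum of a family of charges is finitely subadditive. -/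
lemma familySup_le_sum (hne : G.Nonempty) (hG : ∀ μ ∈ G, IsRealCharge S μ)
    (hub : ∀ μ ∈ G, ∀ A ∈ S, μ A ≤ β A) {ι : Type*} {A : Set Ω} (hA : A ∈ S) {s : Finset ι}
    {B : ι → Set Ω} (hB : ∀ i ∈ s, B i ∈ S) (hd : (s : Set ι).PairwiseDisjoint B)
    (hU : ⋃ i ∈ s, B i = A) : familySup G A ≤ ∑ i ∈ s, familySup G (B i) := by
  refine csSup_le (hne.image _) ?_
  rintro _ ⟨μ, hμ, rfl⟩
  change μ A ≤ _
  rw [← (hG μ hμ).sum_eq hA hB hd hU]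
  exact Finset.sum_le_sum fun i hi => le_familySup hub (hB i hi) hμ

lemma partitionSums_nonempty {A : Set Ω} (hA : A ∈ S) : (partitionSums S G A).Nonempty :=
  ⟨_, {A}, IsPartition.singleton hA, rfl⟩

/-- Partition sums are bounded by every additive upper bound of the family. -/
lemma mem_upperBounds_partitionSums (hne : G.Nonempty) {τ : Set Ω → ℝ} (hτ : IsRealCharge S τ)
    (h : ∀ μ ∈ G, ∀ A ∈ S, μ A ≤ τ A) {A : Set Ω} (hA : A ∈ S) :
    τ A ∈ upperBounds (partitionSums S G A) := by
  rintro _ ⟨P, hP, rfl⟩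
  rw [← hτ.sum_partition hA hP]
  exact Finset.sum_le_sum fun C hC => familySup_le hne h (hP.1 hC)

lemma join_le (hne : G.Nonempty) {τ : Set Ω → ℝ} (hτ : IsRealCharge S τ)
    (h : ∀ μ ∈ G, ∀ A ∈ S, μ A ≤ τ A) {A : Set Ω} (hA : A ∈ S) : join S G A ≤ τ A :=
  csSup_le (partitionSums_nonempty hA) (mem_upperBounds_partitionSums hne hτ h hA)

lemma sum_familySup_le_join (hne : G.Nonempty) (hG : ∀ μ ∈ G, IsRealCharge S μ)
    (hβ : IsRealCharge S β) (hub : ∀ μ ∈ G, ∀ A ∈ S, μ A ≤ β A) {ι : Type*} {A : Set Ω}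
    (hA : A ∈ S) {s : Finset ι} {B : ι → Set Ω} (hB : ∀ i ∈ s, B i ∈ S)
    (hd : (s : Set ι).PairwiseDisjoint B) (hU : ⋃ i ∈ s, B i = A) :
    ∑ i ∈ s, familySup G (B i) ≤ join S G A := by
  classical
  refine le_csSup ⟨_, mem_upperBounds_partitionSums hne hβ hub hA⟩
    ⟨_, isPartition_image hB hd hU, ?_⟩
  exact Finset.sum_image_of_disjoint (familySup_empty hne hG) hd

lemma le_join (hne : G.Nonempty) (hβ : IsRealCharge S β) (hub : ∀ μ ∈ G, ∀ A ∈ S, μ A ≤ β A)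
    {μ : Set Ω → ℝ} (hμ : μ ∈ G) {A : Set Ω} (hA : A ∈ S) : μ A ≤ join S G A :=
  (le_familySup hub hA hμ).trans (le_csSup ⟨_, mem_upperBounds_partitionSums hne hβ hub hA⟩
    ⟨{A}, IsPartition.singleton hA, by simp⟩)

/-- Finite subadditivity of the join: a partition of the union is refined by the pieces `A i`. -/
lemma join_le_sum (hS : IsSetSemiring S) (hne : G.Nonempty) (hG : ∀ μ ∈ G, IsRealCharge S μ)
    (hβ : IsRealCharge S β) (hub : ∀ μ ∈ G, ∀ A ∈ S, μ A ≤ β A) {n : ℕ} {A : Fin n → Set Ω}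
    (hA : ∀ i, A i ∈ S) (hd : Pairwise (Function.onFun Disjoint A)) (hU : (⋃ i, A i) ∈ S) :
    join S G (⋃ i, A i) ≤ ∑ i, join S G (A i) := by
  refine csSup_le (partitionSums_nonempty hU) ?_
  rintro _ ⟨P, hP, rfl⟩
  have hsub : ∀ C ∈ P, C ⊆ ⋃ i, A i := fun C hC => by
    rw [← hP.2.2]; exact subset_sUnion_of_mem hC
  calc ∑ C ∈ P, familySup G C
      ≤ ∑ C ∈ P, ∑ i, familySup G (C ∩ A i) := Finset.sum_le_sum fun C hC =>
        familySup_le_sum hne hG hub (hP.1 hC) (fun i _ => hS.inter_mem _ (hP.1 hC) _ (hA i))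
          (fun i _ j _ hij => (hd hij).mono inter_subset_right inter_subset_right)
          (by simpa [← inter_iUnion] using hsub C hC)
    _ = ∑ i, ∑ C ∈ P, familySup G (C ∩ A i) := Finset.sum_comm
    _ ≤ ∑ i, join S G (A i) := Finset.sum_le_sum fun i _ =>
        sum_familySup_le_join hne hG hβ hub (hA i)
          (fun C hC => hS.inter_mem _ (hP.1 hC) _ (hA i))
          (fun C hC D hD hCD => (hP.2.1 hC hD hCD).mono inter_subset_left inter_subset_left)
          (by
            have h1 : ⋃ C ∈ P, C = ⋃ i, A i := by
              rw [← hP.2.2, sUnion_eq_biUnion]; simp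
            rw [← iUnion₂_inter, h1, inter_eq_right]
            exact subset_iUnion A i)

/-- Finite superadditivity of the join: partitions of the `A i` glue to one of the union. -/
lemma sum_join_le (hne : G.Nonempty) (hG : ∀ μ ∈ G, IsRealCharge S μ)
    (hβ : IsRealCharge S β) (hub : ∀ μ ∈ G, ∀ A ∈ S, μ A ≤ β A) {n : ℕ} {A : Fin n → Set Ω}
    (hA : ∀ i, A i ∈ S) (hd : Pairwise (Function.onFun Disjoint A)) (hU : (⋃ i, A i) ∈ S) :
    ∑ i, join S G (A i) ≤ join S G (⋃ i, A i) := by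
  refine le_of_forall_pos_le_add fun ε hε => ?_
  have hδ : 0 < ε / (n + 1) := by positivity
  have hex : ∀ i, ∃ P : Finset (Set Ω), IsPartition S (A i) P ∧
      join S G (A i) - ε / (n + 1) < ∑ C ∈ P, familySup G C := by
    intro i
    obtain ⟨_, ⟨P, hP, rfl⟩, h⟩ := exists_lt_of_lt_csSup (partitionSums_nonempty (G := G) (hA i))
      (sub_lt_self (join S G (A i)) hδ)
    exact ⟨P, hP, h⟩
  choose P hP hlt using hex
  have hsub : ∀ i, ∀ C ∈ P i, C ⊆ A i := fun i C hC => by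
    rw [← (hP i).2.2]; exact subset_sUnion_of_mem hC
  have hglue : ∑ i, ∑ C ∈ P i, familySup G C ≤ join S G (⋃ i, A i) := by
    rw [Finset.sum_sigma']
    refine sum_familySup_le_join hne hG hβ hub hU (B := fun x : (_ : Fin n) × Set Ω => x.2)
      ?_ ?_ ?_
    · rintro ⟨i, C⟩ h
      exact (hP i).1 (Finset.mem_sigma.1 h).2
    · rintro ⟨i, C⟩ h ⟨j, D⟩ h' hne
      have hC : C ∈ P i := (Finset.mem_sigma.1 h).2
      have hD : D ∈ P j := (Finset.mem_sigma.1 h').2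
      by_cases hij : i = j
      · subst hij
        exact (hP i).2.1 hC hD (fun e => hne (by rw [e]))
      · exact (hd hij).mono (hsub i C hC) (hsub j D hD)
    · ext x
      simp only [mem_iUnion, ← (hP _).2.2]
      simp
  have hsum : ∑ i, (join S G (A i) - ε / (n + 1)) ≤ ∑ i, ∑ C ∈ P i, familySup G C :=
    Finset.sum_le_sum fun i _ => (hlt i).le
  rw [Finset.sum_sub_distrib] at hsum
  have hn : ∑ _i : Fin n, ε / ((n : ℝ) + 1) ≤ ε := by
    rw [Finset.sum_const, Finset.card_univ, Fintype.card_fin, nsmul_eq_mul, mul_div_assoc',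
      div_le_iff₀ (by positivity)]
    nlinarith
  linarith

lemma isRealCharge_join (hS : IsSetSemiring S) (hne : G.Nonempty)
    (hG : ∀ μ ∈ G, IsRealCharge S μ) (hβ : IsRealCharge S β)
    (hub : ∀ μ ∈ G, ∀ A ∈ S, μ A ≤ β A) : IsRealCharge S (join S G) where
  empty := by
    obtain ⟨μ, hμ⟩ := hne
    have h1 := join_le ⟨μ, hμ⟩ hβ hub hS.empty_mem
    have h2 := le_join ⟨μ, hμ⟩ hβ hub hμ hS.empty_mem
    rw [hβ.empty] at h1
    rw [(hG μ hμ).empty] at h2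
    exact le_antisymm h1 h2
  additive _ _ hA hd hU := le_antisymm (join_le_sum hS hne hG hβ hub hA hd hU)
    (sum_join_le hne hG hβ hub hA hd hU)

end Join

/-- Dedekind completeness of `ca(S)`: a nonempty family of finite-variation
signed measures bounded above by a finite-variation signed measure has a least upper bound
(in the pointwise order) which is a finite-variation signed measure. -/
theorem statement8 {Ω : Type*} (S : Set (Set Ω)) (hS : MeasureTheory.IsSetSemiring S)
    (G : Set (Set Ω → ℝ)) (hne : G.Nonempty)
    (hG : ∀ μ ∈ G, IsRealCharge S μ ∧ CountablyAdditiveR S μ ∧ FiniteVar S μ)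
    (β : Set Ω → ℝ) (hβ : IsRealCharge S β ∧ CountablyAdditiveR S β ∧ FiniteVar S β)
    (hub : ∀ μ ∈ G, ∀ A ∈ S, μ A ≤ β A) :
    ∃ σ : Set Ω → ℝ, IsRealCharge S σ ∧ CountablyAdditiveR S σ ∧ FiniteVar S σ ∧
      (∀ μ ∈ G, ∀ A ∈ S, μ A ≤ σ A) ∧
      (∀ τ : Set Ω → ℝ, IsRealCharge S τ → CountablyAdditiveR S τ → FiniteVar S τ →
        (∀ μ ∈ G, ∀ A ∈ S, μ A ≤ τ A) → ∀ A ∈ S, σ A ≤ τ A) := by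
  have hG' : ∀ μ ∈ G, IsRealCharge S μ := fun μ hμ => (hG μ hμ).1
  have hσ := isRealCharge_join hS hne hG' hβ.1 hub
  have hle : ∀ μ ∈ G, ∀ A ∈ S, μ A ≤ join S G A := fun μ hμ A hA => le_join hne hβ.1 hub hμ hA
  have hσβ : ∀ A ∈ S, join S G A ≤ β A := fun A hA => join_le hne hβ.1 hub hA
  obtain ⟨μ₀, hμ₀⟩ := hne
  obtain ⟨hμc, hμs, hμv⟩ := hG μ₀ hμ₀
  exact ⟨join S G, hσ,
    countablyAdditive_of_between hS hμc hμs hβ.1 hβ.2.1 hσ (hle μ₀ hμ₀) hσβ,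
    finiteVar_of_between hμv hβ.2.2 (hle μ₀ hμ₀) hσβ, hle,
    fun τ hτ _ _ h A hA => join_le ⟨μ₀, hμ₀⟩ hτ h hA⟩

end SignedCharges
end

section
/- Let μ be a finite (real-valued) signed charge on a semi-ring 𝒮, not assumed of finite variation. The charges μ⁺ := μ ∨ 0 and μ⁻ := (-μ) ∨ 0, with values in [0,∞], satisfy μ⁺ = μ + μ⁻ and |μ| = μ⁺ + μ⁻. If μ is a finite signed measure, then μ⁺ and μ⁻ are (possibly infinite) measures. If one of μ⁺, μ⁻ is finite, then so is the other. -/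
/-!
The argument runs in `ℝ≥0∞`: for `f : Set Ω → ℝ≥0∞`, let `partSup S f A` be the supremum of
`∑ C ∈ P, f C` over finite partitions `P` of `A`. Then `μ⁺`, `μ⁻`, `|μ|` are the partition suprema
of `p = ofReal ∘ μ`, `n = ofReal ∘ (-μ)` and `p + n`.

Both identities hold without refining partitions. By additivity, `∑ p C = μ A + ∑ n C` for each
fixed partition of `A`, and taking suprema gives `μ⁺ = μ + μ⁻`; finiteness of one side then forces
finiteness of the other. Also `∑ p C` and `∑ n C` differ by a constant depending only on `A`, so of
two partitions the one with the larger `∑ p C` also has the larger `∑ n C`. The two suprema can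
therefore be approached simultaneously, and `|μ| = μ⁺ + μ⁻`.

For countable additivity, let `A = ⨆ Aₙ` be a disjoint union. If `f ∅ = 0`, finitely many
partitions of distinct `Aₙ` can be completed by a partition of the rest of `A` (a semi-ring
property), so `∑ partSup f Aₙ ≤ partSup f A` (`tsum_partSup_le`). If `f` is countably subadditive,
cutting the cells of a partition of `A` by the `Aₙ` gives the reverse inequality
(`partSup_le_tsum`). The positive part of a signed measure is countably subadditive.
-/

open MeasureTheory Set
open scoped ENNReal NNReal BigOperators

namespace SignedCharges

variable {Ω : Type*}

/-- The supremum of `∑ C ∈ P, f C` over the finite partitions `P` of `A` by elements of `S`, for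
an `ℝ≥0∞`-valued `f`. It is `0` if `A` has no such partition. -/
noncomputable def partSup (S : Set (Set Ω)) (f : Set Ω → ℝ≥0∞) (A : Set Ω) : ℝ≥0∞ :=
  ⨆ P : {P : Finset (Set Ω) // IsPartition S A P}, ∑ C ∈ P.1, f C

section

variable {S : Set (Set Ω)}

lemma isPartition_singleton {A : Set Ω} (hA : A ∈ S) : IsPartition S A {A} := by
  refine ⟨by simpa using hA, by simp, by simp⟩

lemma nonempty_partition {A : Set Ω} (hA : A ∈ S) :
    Nonempty {P : Finset (Set Ω) // IsPartition S A P} := ⟨⟨_, isPartition_singleton hA⟩⟩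

lemma sum_le_partSup (f : Set Ω → ℝ≥0∞) {A : Set Ω} {P : Finset (Set Ω)}
    (hP : IsPartition S A P) : ∑ C ∈ P, f C ≤ partSup S f A :=
  le_iSup (fun P : {P : Finset (Set Ω) // IsPartition S A P} => ∑ C ∈ P.1, f C) ⟨P, hP⟩

lemma coe_sum_ereal {ι : Type*} (s : Finset ι) (f : ι → ℝ≥0∞) :
    ((∑ i ∈ s, f i : ℝ≥0∞) : EReal) = ∑ i ∈ s, (f i : EReal) :=
  map_sum (⟨⟨((↑) : ℝ≥0∞ → EReal), rfl⟩, EReal.coe_ennreal_add⟩ : ℝ≥0∞ →+ EReal) f s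

lemma coe_tsum_ereal {ι : Type*} (f : ι → ℝ≥0∞) :
    ((∑' i, f i : ℝ≥0∞) : EReal) = ∑' i, (f i : EReal) := by
  have h := (ENNReal.summable (f := f)).hasSum
  exact (h.map (⟨⟨((↑) : ℝ≥0∞ → EReal), rfl⟩, EReal.coe_ennreal_add⟩ : ℝ≥0∞ →+ EReal)
    continuous_coe_ennreal_ereal).tsum_eq.symm

/-- A partition supremum of `EReal`-valued nonnegative functions is a `partSup`. The hypothesis
`A ∈ S` matters: without partitions the left side would be `⊥`, not `0`. -/
lemma iSup_eq_coe_partSup {g : Set Ω → EReal} {f : Set Ω → ℝ≥0∞} (h : ∀ C, g C = f C)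
    {A : Set Ω} (hA : A ∈ S) :
    (⨆ P : Finset (Set Ω), ⨆ _ : IsPartition S A P, ∑ C ∈ P, g C) = (partSup S f A : EReal) := by
  have := nonempty_partition hA
  rw [partSup, Monotone.map_ciSup_of_continuousAt continuous_coe_ennreal_ereal.continuousAt
    EReal.coe_ennreal_strictMono.monotone, iSup_subtype]
  simp only [coe_sum_ereal, h]

/-- Families with disjoint members that may repeat the empty set still form partitions. -/
lemma sum_le_partSup_of_indexed {ι : Type*} (f : Set Ω → ℝ≥0∞) (f0 : f ∅ = 0)
    {A : Set Ω} (s : Finset ι) (B : ι → Set Ω) (hB : ∀ i ∈ s, B i ∈ S)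
    (hd : (s : Set ι).PairwiseDisjoint B) (hU : ⋃ i ∈ s, B i = A) :
    ∑ i ∈ s, f (B i) ≤ partSup S f A := by
  classical
  rw [← Finset.sum_image_of_disjoint (g := f) f0 hd]
  refine sum_le_partSup f ⟨?_, ?_, ?_⟩
  · intro C hC
    obtain ⟨i, hi, rfl⟩ := Finset.mem_image.1 hC
    exact hB i hi
  · intro C hC D hD hne
    obtain ⟨i, hi, rfl⟩ := Finset.mem_image.1 hC
    obtain ⟨j, hj, rfl⟩ := Finset.mem_image.1 hD
    exact hd hi hj (fun h => hne (by rw [h]))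
  · rw [← hU]
    simp

/-- Cells `t` already chosen are kept aside so that the partitions of the `A n` can be added one
at a time; only at the end is the remainder of `A` partitioned. -/
lemma sum_partSup_add_sum_le (hS : IsSetSemiring S) (f : Set Ω → ℝ≥0∞) (f0 : f ∅ = 0)
    {B : Set Ω} (hB : B ∈ S) (A : ℕ → Set Ω) (hA : ∀ n, A n ∈ S)
    (hd : Pairwise (Function.onFun Disjoint A)) (hAB : ∀ n, A n ⊆ B) (s : Finset ℕ) :
    ∀ t : Finset (Set Ω), (t : Set (Set Ω)) ⊆ S → (t : Set (Set Ω)).PairwiseDisjoint id →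
      (∀ C ∈ t, C ⊆ B) → (∀ C ∈ t, ∀ n ∈ s, Disjoint C (A n)) →
      ∑ n ∈ s, partSup S f (A n) + ∑ C ∈ t, f C ≤ partSup S f B := by
  classical
  induction s using Finset.induction_on with
  | empty =>
    intro t htS htd htB _
    rw [Finset.sum_empty, zero_add]
    have hP : IsPartition S B (t ∪ hS.disjointOfDiffUnion hB htS) := by
      refine ⟨?_, ?_, hS.sUnion_union_disjointOfDiffUnion_of_subset hB htS htB⟩
      · rw [Finset.coe_union]
        exact union_subset htS (hS.disjointOfDiffUnion_subset hB htS)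
      · rw [Finset.coe_union]
        exact hS.pairwiseDisjoint_union_disjointOfDiffUnion hB htS htd
    exact (Finset.sum_le_sum_of_subset Finset.subset_union_left).trans (sum_le_partSup f hP)
  | insert n s hn ih =>
    intro t htS htd htB htA
    rw [Finset.sum_insert hn, add_assoc, partSup]
    have := nonempty_partition (hA n)
    rw [ENNReal.iSup_add]
    refine iSup_le fun ⟨P, hPS, hPd, hPU⟩ => ?_
    have hPA : ∀ C ∈ P, C ⊆ A n := fun C hC => by
      rw [← hPU]; exact subset_sUnion_of_mem hC
    have hPt : ∀ C ∈ P, ∀ D ∈ t, Disjoint C D := fun C hC D hD =>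
      (htA D hD n (Finset.mem_insert_self _ _)).symm.mono_left (hPA C hC)
    have hsum : ∑ C ∈ P ∪ t, f C = ∑ C ∈ P, f C + ∑ C ∈ t, f C := by
      rw [← Finset.sum_union_inter, Finset.sum_eq_zero (s := P ∩ t), add_zero]
      intro C hC
      rw [Finset.mem_inter] at hC
      -- a common cell is disjoint from itself, hence empty
      have : C = ∅ := disjoint_self.1 (hPt C hC.1 C hC.2)
      rw [this, f0]
    have key := ih (P ∪ t) (by rw [Finset.coe_union]; exact union_subset hPS htS)
      (by
        rw [Finset.coe_union, pairwiseDisjoint_union]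
        exact ⟨hPd, htd, fun C hC D hD _ => hPt C hC D hD⟩)
      (by
        intro C hC
        rcases Finset.mem_union.1 hC with h | h
        · exact (hPA C h).trans (hAB n)
        · exact htB C h)
      (by
        intro C hC m hm
        rcases Finset.mem_union.1 hC with h | h
        · have hnm : n ≠ m := fun h' => hn (h' ▸ hm)
          exact (hd hnm).mono_left (hPA C h)
        · exact htA C h m (Finset.mem_insert_of_mem hm))
    rw [hsum] at key
    calc _ = ∑ n ∈ s, partSup S f (A n) + (∑ C ∈ P, f C + ∑ C ∈ t, f C) := by
          simp only; ring
      _ ≤ _ := key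

lemma tsum_partSup_le (hS : IsSetSemiring S) (f : Set Ω → ℝ≥0∞) (f0 : f ∅ = 0)
    (A : ℕ → Set Ω) (hA : ∀ n, A n ∈ S) (hd : Pairwise (Function.onFun Disjoint A))
    (hU : (⋃ n, A n) ∈ S) : ∑' n, partSup S f (A n) ≤ partSup S f (⋃ n, A n) := by
  rw [ENNReal.tsum_eq_iSup_sum]
  refine iSup_le fun s => ?_
  simpa using sum_partSup_add_sum_le hS f f0 hU A hA hd (subset_iUnion A) s ∅
    (by simp) (by simp) (by simp) (by simp)

lemma partSup_le_tsum (hS : IsSetSemiring S) (f : Set Ω → ℝ≥0∞) (f0 : f ∅ = 0)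
    (hf : ∀ A : ℕ → Set Ω, (∀ n, A n ∈ S) → Pairwise (Function.onFun Disjoint A) →
      (⋃ n, A n) ∈ S → f (⋃ n, A n) ≤ ∑' n, f (A n))
    (A : ℕ → Set Ω) (hA : ∀ n, A n ∈ S) (hd : Pairwise (Function.onFun Disjoint A)) :
    partSup S f (⋃ n, A n) ≤ ∑' n, partSup S f (A n) := by
  refine iSup_le fun ⟨P, hPS, hPd, hPU⟩ => ?_
  have h1 : ∀ C ∈ P, f C ≤ ∑' n, f (C ∩ A n) := by
    intro C hC
    have hCU : ⋃ n, C ∩ A n = C := by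
      rw [← inter_iUnion, inter_eq_left, ← hPU]
      exact subset_sUnion_of_mem hC
    have := hf (fun n => C ∩ A n) (fun n => hS.inter_mem _ (hPS hC) _ (hA n))
      (fun i j hij => (hd hij).mono inter_subset_right inter_subset_right)
      (by rw [hCU]; exact hPS hC)
    rwa [hCU] at this
  calc ∑ C ∈ P, f C ≤ ∑ C ∈ P, ∑' n, f (C ∩ A n) := Finset.sum_le_sum h1
    _ = ∑' n, ∑ C ∈ P, f (C ∩ A n) :=
        (Summable.tsum_finsetSum fun _ _ => ENNReal.summable).symm
    _ ≤ ∑' n, partSup S f (A n) := by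
        refine ENNReal.tsum_le_tsum fun n => ?_
        refine sum_le_partSup_of_indexed f f0 P (fun C => C ∩ A n)
          (fun C hC => hS.inter_mem _ (hPS hC) _ (hA n))
          (fun C hC D hD hne => (hPd hC hD hne).mono inter_subset_left inter_subset_left) ?_
        rw [← iUnion₂_inter, inter_eq_right]
        have : ⋃ C ∈ P, C = ⋃₀ (P : Set (Set Ω)) := by rw [sUnion_eq_biUnion]; simp
        rw [this, hPU]
        exact subset_iUnion A n

/-- The positive part of a signed measure is countably subadditive, hence its partition supremum
is countably additive. -/
lemma countablyAdditive_partSup (hS : IsSetSemiring S) {μ : Set Ω → ℝ} (h0 : μ ∅ = 0)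
    (hμ : CountablyAdditiveR S μ) (A : ℕ → Set Ω) (hA : ∀ n, A n ∈ S)
    (hd : Pairwise (Function.onFun Disjoint A)) (hU : (⋃ n, A n) ∈ S) :
    partSup S (fun C => ENNReal.ofReal (μ C)) (⋃ n, A n)
      = ∑' n, partSup S (fun C => ENNReal.ofReal (μ C)) (A n) := by
  refine le_antisymm (partSup_le_tsum hS _ (by simp [h0]) ?_ A hA hd)
    (tsum_partSup_le hS _ (by simp [h0]) A hA hd hU)
  intro B hB hBd hBU
  have hlim := (ENNReal.continuous_ofReal.tendsto _).comp (hμ B hB hBd hBU)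
  refine le_of_tendsto' hlim fun s => ?_
  calc ENNReal.ofReal (∑ n ∈ s, μ (B n)) ≤ ∑ n ∈ s, ENNReal.ofReal (μ (B n)) :=
        Finset.le_sum_of_subadditive ENNReal.ofReal ENNReal.ofReal_zero.le
          (fun _ _ => ENNReal.ofReal_add_le) s _
    _ ≤ _ := ENNReal.sum_le_tsum s

lemma IsRealCharge.eq_sum {μ : Set Ω → ℝ} (hμ : IsRealCharge S μ) {A : Set Ω} (hA : A ∈ S)
    {P : Finset (Set Ω)} (hP : IsPartition S A P) : μ A = ∑ C ∈ P, μ C := by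
  obtain ⟨hPS, hPd, hPU⟩ := hP
  have hU : ⋃ i, ((P.equivFin.symm i : P) : Set Ω) = A := by
    rw [← hPU, sUnion_eq_iUnion]
    exact P.equivFin.symm.surjective.iUnion_comp (fun C : P => (C : Set Ω))
  have := hμ.additive _ (fun i => ((P.equivFin.symm i : P) : Set Ω))
    (fun i => hPS (P.equivFin.symm i).2)
    (fun i j hij => hPd (P.equivFin.symm i).2 (P.equivFin.symm j).2
      (fun h => hij (P.equivFin.symm.injective (Subtype.ext h))))
    (by rw [hU]; exact hA)
  rw [hU] at this
  rw [this, Equiv.sum_comp P.equivFin.symm (fun C : P => μ C), Finset.sum_coe_sort P μ]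

/-- On one partition, `∑ μ(C)⁺ = μ(A) + ∑ μ(C)⁻`, with `μ(A)` split into its parts so that the
identity makes sense in `ℝ≥0∞`. -/
lemma IsRealCharge.sum_ofReal {μ : Set Ω → ℝ} (hμ : IsRealCharge S μ) {A : Set Ω} (hA : A ∈ S)
    {P : Finset (Set Ω)} (hP : IsPartition S A P) :
    ∑ C ∈ P, ENNReal.ofReal (μ C) + ENNReal.ofReal (-μ A)
      = ∑ C ∈ P, ENNReal.ofReal (-μ C) + ENNReal.ofReal (μ A) := by
  have hmax : ∀ x : ℝ, ENNReal.ofReal x = ENNReal.ofReal (max x 0) := fun x => by simp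
  simp only [hmax (μ _), hmax (-μ _)]
  rw [← ENNReal.ofReal_sum_of_nonneg (fun _ _ => le_max_right _ _),
    ← ENNReal.ofReal_sum_of_nonneg (fun _ _ => le_max_right _ _),
    ← ENNReal.ofReal_add (Finset.sum_nonneg fun _ _ => le_max_right _ _) (le_max_right _ _),
    ← ENNReal.ofReal_add (Finset.sum_nonneg fun _ _ => le_max_right _ _) (le_max_right _ _)]
  congr 1
  have hx : ∀ x : ℝ, max x 0 = x + max (-x) 0 := fun x => by
    rcases le_total x 0 with h | h
    · rw [max_eq_right h, max_eq_left (by linarith)]; ring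
    · rw [max_eq_left h, max_eq_right (by linarith)]; ring
  rw [hx (μ A), Finset.sum_congr rfl (fun C _ => hx (μ C)), Finset.sum_add_distrib,
    ← hμ.eq_sum hA hP]
  ring

lemma IsRealCharge.partSup_add {μ : Set Ω → ℝ} (hμ : IsRealCharge S μ) {A : Set Ω} (hA : A ∈ S) :
    partSup S (fun C => ENNReal.ofReal (μ C)) A + ENNReal.ofReal (-μ A)
      = partSup S (fun C => ENNReal.ofReal (-μ C)) A + ENNReal.ofReal (μ A) := by
  have := nonempty_partition hA
  rw [partSup, partSup, ENNReal.iSup_add, ENNReal.iSup_add]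
  exact iSup_congr fun P => hμ.sum_ofReal hA P.2

lemma IsRealCharge.partSup_var {μ : Set Ω → ℝ} (hμ : IsRealCharge S μ) {A : Set Ω} (hA : A ∈ S) :
    partSup S (fun C => ENNReal.ofReal (μ C) + ENNReal.ofReal (-μ C)) A
      = partSup S (fun C => ENNReal.ofReal (μ C)) A
        + partSup S (fun C => ENNReal.ofReal (-μ C)) A := by
  rw [partSup, partSup, partSup, ENNReal.iSup_add_iSup]
  · simp only [Finset.sum_add_distrib]
  · intro P Q
    -- the positive and the negative sums are ordered alike, so one partition dominates in both
    have mono : ∀ P Q : {P : Finset (Set Ω) // IsPartition S A P},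
        ∑ C ∈ P.1, ENNReal.ofReal (μ C) ≤ ∑ C ∈ Q.1, ENNReal.ofReal (μ C) →
        ∑ C ∈ P.1, ENNReal.ofReal (-μ C) ≤ ∑ C ∈ Q.1, ENNReal.ofReal (-μ C) := by
      intro P Q h
      have hP := hμ.sum_ofReal hA P.2
      have hQ := hμ.sum_ofReal hA Q.2
      rw [← ENNReal.add_le_add_iff_right (ENNReal.ofReal_ne_top (r := μ A)), ← hP, ← hQ]
      gcongr
    rcases le_total (∑ C ∈ P.1, ENNReal.ofReal (μ C)) (∑ C ∈ Q.1, ENNReal.ofReal (μ C)) with h | h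
    · exact ⟨Q, by gcongr⟩
    · exact ⟨P, add_le_add_right (mono Q P h) _⟩

lemma pos_eq (μ : Set Ω → ℝ) {A : Set Ω} (hA : A ∈ S) :
    pos S (toE μ) A = (partSup S (fun C => ENNReal.ofReal (μ C)) A : EReal) :=
  iSup_eq_coe_partSup (fun C => by rw [EReal.coe_ennreal_ofReal, EReal.coe_strictMono.monotone.map_max]; rfl) hA

lemma neg_eq (μ : Set Ω → ℝ) {A : Set Ω} (hA : A ∈ S) :
    neg S (toE μ) A = (partSup S (fun C => ENNReal.ofReal (-μ C)) A : EReal) :=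
  iSup_eq_coe_partSup
    (fun C => by rw [EReal.coe_ennreal_ofReal, EReal.coe_strictMono.monotone.map_max, EReal.coe_neg]; rfl) hA

lemma var_eq (μ : Set Ω → ℝ) {A : Set Ω} (hA : A ∈ S) :
    var S (toE μ) A
      = (partSup S (fun C => ENNReal.ofReal (μ C) + ENNReal.ofReal (-μ C)) A : EReal) := by
  refine iSup_eq_coe_partSup (fun C => ?_) hA
  rw [EReal.coe_ennreal_add, EReal.coe_ennreal_ofReal, EReal.coe_ennreal_ofReal, ← EReal.coe_add,
    toE, ← EReal.coe_neg, ← EReal.coe_strictMono.monotone.map_max]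
  congr 1
  rcases le_total (μ C) 0 with h | h
  · rw [max_eq_right (a := μ C) (b := 0) h, max_eq_left (a := -μ C) (b := 0) (by linarith),
      max_eq_right (by linarith)]; ring
  · rw [max_eq_left (a := μ C) (b := 0) h, max_eq_right (a := -μ C) (b := 0) (by linarith),
      max_eq_left (by linarith)]; ring

/-- Cancelling the parts of a real number `a` against each other is legitimate in `EReal` even
when `x` and `y` are infinite. -/
lemma coe_eq_add_coe {x y : ℝ≥0∞} {a : ℝ}
    (h : x + ENNReal.ofReal (-a) = y + ENNReal.ofReal a) : (x : EReal) = (a : EReal) + y := by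
  rcases le_total 0 a with ha | ha
  · rw [ENNReal.ofReal_of_nonpos (by linarith : -a ≤ 0), add_zero] at h
    rw [h, EReal.coe_ennreal_add, EReal.coe_ennreal_ofReal, max_eq_left ha, add_comm]
  · rw [ENNReal.ofReal_of_nonpos ha, add_zero] at h
    rw [← h, EReal.coe_ennreal_add, EReal.coe_ennreal_ofReal, max_eq_left (by linarith : 0 ≤ -a),
      add_comm (x : EReal), ← add_assoc, ← EReal.coe_add]
    simp

lemma countablyAdditiveE_of_eq {g : Set Ω → EReal} {f : Set Ω → ℝ≥0∞}
    (hg : ∀ A ∈ S, g A = (f A : EReal))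
    (hf : ∀ A : ℕ → Set Ω, (∀ n, A n ∈ S) → Pairwise (Function.onFun Disjoint A) →
      (⋃ n, A n) ∈ S → f (⋃ n, A n) = ∑' n, f (A n)) : CountablyAdditiveE S g := by
  intro A hA hd hU
  rw [hg _ hU, hf A hA hd hU, coe_tsum_ereal]
  exact tsum_congr fun n => (hg _ (hA n)).symm

end

/-- for a finite signed charge `μ` (not necessarily of finite variation),
`μ⁺ = μ + μ⁻` and `|μ| = μ⁺ + μ⁻`; if `μ` is a finite signed measure then `μ⁺, μ⁻` are
(possibly infinite) measures; if one of `μ⁺, μ⁻` is finite then so is the other. -/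
theorem statement11 {Ω : Type*} (S : Set (Set Ω)) (hS : MeasureTheory.IsSetSemiring S)
    (μ : Set Ω → ℝ) (hμ : IsRealCharge S μ) :
    (∀ A ∈ S, pos S (toE μ) A = (μ A : EReal) + neg S (toE μ) A) ∧
    (∀ A ∈ S, var S (toE μ) A = pos S (toE μ) A + neg S (toE μ) A) ∧
    (CountablyAdditiveR S μ →
      CountablyAdditiveE S (pos S (toE μ)) ∧ CountablyAdditiveE S (neg S (toE μ))) ∧
    ((∀ A ∈ S, pos S (toE μ) A ≠ ⊤) ↔ (∀ A ∈ S, neg S (toE μ) A ≠ ⊤)) := by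
  have h1 : ∀ A ∈ S, pos S (toE μ) A = (μ A : EReal) + neg S (toE μ) A := fun A hA => by
    rw [pos_eq μ hA, neg_eq μ hA]
    exact coe_eq_add_coe (hμ.partSup_add hA)
  refine ⟨h1, ?_, ?_, ?_⟩
  · intro A hA
    rw [var_eq μ hA, pos_eq μ hA, neg_eq μ hA, hμ.partSup_var hA, EReal.coe_ennreal_add]
  · intro hc
    have hc' : CountablyAdditiveR S (fun C => -μ C) := fun A hA hd hU => (hc A hA hd hU).neg
    exact ⟨countablyAdditiveE_of_eq (fun A hA => pos_eq μ hA)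
        (countablyAdditive_partSup hS hμ.empty hc),
      countablyAdditiveE_of_eq (fun A hA => neg_eq μ hA)
        (countablyAdditive_partSup hS (by simp [hμ.empty]) hc')⟩
  · refine forall₂_congr fun A hA => not_congr ?_
    rw [h1 A hA, neg_eq μ hA]
    generalize partSup S (fun C => ENNReal.ofReal (-μ C)) A = y
    induction y with
    | top => simp
    | coe y =>
      rw [EReal.coe_nnreal_eq_coe_real, ← EReal.coe_add]
      simp only [EReal.coe_ne_top]

end SignedCharges
end
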